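/- Let 𝔖 be a board with no isolated point and let m be an odd positive integer. Then V(𝔖,ℤ/mℤ) = 𝓕(𝔖,ℤ/mℤ): the (ℤ/mℤ)-submodule of the module of functions 𝔖 → ℤ/mℤ generated by the reductions modulo m of the moves of 𝔖 is the whole module. -/

import Mathlib

def dirs : Finset (ℤ × ℤ) := {(1,0), (-1,0), (0,1), (0,-1)}

def chi (X : ℤ × ℤ) : (ℤ × ℤ) → ℤ := fun Y => if Y = X then 1 else 0

def chiSet (I : Finset (ℤ × ℤ)) : (ℤ × ℤ) → ℤ := fun P => if P ∈ I then 1 else 0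

def IsMove (S : Finset (ℤ × ℤ)) (g : (ℤ × ℤ) → ℤ) : Prop :=
  ∃ P d : ℤ × ℤ, d ∈ dirs ∧ P ∈ S ∧ P + d ∈ S ∧ P + d + d ∈ S ∧
    g = chi P + chi (P + d) - chi (P + d + d)

def IsMiddle (S : Finset (ℤ × ℤ)) (Q : ℤ × ℤ) : Prop :=
  ∃ P d : ℤ × ℤ, d ∈ dirs ∧ P ∈ S ∧ P + d ∈ S ∧ P + d + d ∈ S ∧ Q = P + d

def Neighbor (S : Finset (ℤ × ℤ)) (A B : ℤ × ℤ) : Prop :=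
  ∃ d ∈ dirs, A ∈ S ∧ A + d ∈ S ∧ A + d + d ∈ S ∧ B = A + d + d

def NoIsolatedPoint (S : Finset (ℤ × ℤ)) : Prop :=
  ∀ P ∈ S, ∃ Q, Relation.EqvGen (Neighbor S) P Q ∧ IsMiddle S Q

def IsResourceCount (S : Finset (ℤ × ℤ)) (π : (ℤ × ℤ) → ℝ) : Prop :=
  ∀ P d : ℤ × ℤ, d ∈ dirs → P ∈ S → P + d ∈ S → P + d + d ∈ S →
    π (P + d + d) ≤ π P + π (P + d)

def LegalMove (S I : Finset (ℤ × ℤ)) (g : (ℤ × ℤ) → ℤ) (I' : Finset (ℤ × ℤ)) : Prop :=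
  ∃ P d : ℤ × ℤ, d ∈ dirs ∧ P ∈ S ∧ P + d ∈ S ∧ P + d + d ∈ S ∧
    g = chi P + chi (P + d) - chi (P + d + d) ∧
    P ∈ I ∧ P + d ∈ I ∧ P + d + d ∉ I ∧
    I' = (I \ {P, P + d}) ∪ {P + d + d}

def Transforms (S : Finset (ℤ × ℤ)) :
    List ((ℤ × ℤ) → ℤ) → Finset (ℤ × ℤ) → Finset (ℤ × ℤ) → Prop
  | [], I, J => I = J
  | g :: L, I, J => ∃ I', LegalMove S I g I' ∧ Transforms S L I' J

def boxProd (g₁ g₂ : (ℤ × ℤ) → ℤ) : Sym2 (ℤ × ℤ) → ℤ :=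
  Sym2.lift ⟨fun A B => if A = B then g₁ A * g₂ A else g₁ A * g₂ B + g₁ B * g₂ A, by
    intro A B
    by_cases h : A = B
    · subst h; rfl
    · simp only [if_neg h, if_neg (Ne.symm h)]; ring⟩

def moveAbs (g : (ℤ × ℤ) → ℤ) : (ℤ × ℤ) → ℤ := fun A => |g A|

def IsQMove (S : Finset (ℤ × ℤ)) (c : Sym2 (ℤ × ℤ) → ℤ) : Prop :=
  (∃ A g, A ∈ S ∧ IsMove S g ∧ g A = 0 ∧ c = boxProd (fun B => 2 * chi A B) g) ∨
  (∃ g, IsMove S g ∧ c = boxProd (moveAbs g) g)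

def StepList (S : Finset (ℤ × ℤ)) :
    List (Finset (ℤ × ℤ)) → List ((ℤ × ℤ) → ℤ) → Prop
  | [_], [] => True
  | I :: I' :: Ps, g :: L => LegalMove S I g I' ∧ StepList S (I' :: Ps) L
  | _, _ => False

def pOfSeq (A : ℤ × ℤ) : List (Finset (ℤ × ℤ)) → List ((ℤ × ℤ) → ℤ) → ℕ
  | I :: Ps, g :: L => (if g A ≠ 0 then 1 else if A ∈ I then 1 else 0) + pOfSeq A Ps L
  | _, _ => 0

def bothCount (A A' : ℤ × ℤ) : List ((ℤ × ℤ) → ℤ) → ℕ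
  | [] => 0
  | g :: L => (if g A ≠ 0 ∧ g A' ≠ 0 then 1 else 0) + bothCount A A' L

noncomputable def pagoda (P : ℤ × ℤ) : ℝ := ((Real.sqrt 5 - 1) / 2) ^ (P.1.natAbs + P.2.natAbs)

def suppSubmodule (m : ℕ) (S : Finset (ℤ × ℤ)) : Submodule (ZMod m) ((ℤ × ℤ) → ZMod m) where
  carrier := {h | ∀ P ∉ S, h P = 0}
  add_mem' := by
    intro a b ha hb P hP
    simp only [Pi.add_apply, ha P hP, hb P hP, add_zero]
  zero_mem' := by
    intro P hP
    rfl
  smul_mem' := by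
    intro c a ha P hP
    simp only [Pi.smul_apply, ha P hP, smul_zero]

/-!
The sum of a move and its reverse is twice the indicator of its middle point, so when `2` is
invertible the indicators of all middle points are generated by the moves. Subtracting that of the
middle point from a move shows that the indicators of its two extremities are congruent modulo the
moves. Without isolated points, every indicator is therefore congruent to that of a middle point,
hence to `0`.
-/

section SupportedFunctions

variable {ι : Type*} [DecidableEq ι] (R : Type*) [Semiring R]

lemma span_image_single_eq_pi_compl (S : Finset ι) :
    Submodule.span R ((fun i => Pi.single i (1 : R)) '' (S : Set ι)) =
      Submodule.pi (S : Set ι)ᶜ fun _ => ⊥ := by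
  apply le_antisymm
  · rw [Submodule.span_le]
    rintro _ ⟨i, hi, rfl⟩ j hj
    exact Pi.single_eq_of_ne (fun h : j = i => hj (h ▸ hi)) 1
  · intro f hf
    have expansion : f = ∑ i ∈ S, f i • Pi.single i (1 : R) := by
      ext j
      by_cases hj : j ∈ S
      · simp [Pi.single_apply, hj]
      · simpa [Pi.single_apply, hj] using hf j hj
    rw [expansion]
    exact Submodule.sum_mem _ fun i hi =>
      Submodule.smul_mem _ _ (Submodule.subset_span (Set.mem_image_of_mem _ hi))

end SupportedFunctions

lemma neg_mem_dirs {d : ℤ × ℤ} (hd : d ∈ dirs) : -d ∈ dirs := by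
  revert d
  decide

section MoveSpan

variable (R : Type*) [Ring R]

/-- The module `V(S, R)` generated over `R` by the moves of the board `S`. Its elements are
functions on all of `ℤ × ℤ`, vanishing off `S`. -/
def moveSpan (S : Finset (ℤ × ℤ)) : Submodule R (ℤ × ℤ → R) :=
  Submodule.span R ((fun (f : ℤ × ℤ → ℤ) (P : ℤ × ℤ) => (f P : R)) '' {f | IsMove S f})

lemma intCast_chi_add_chi_sub_chi (P Q T : ℤ × ℤ) :
    (fun X => ((chi P + chi Q - chi T) X : R)) =
      Pi.single P 1 + Pi.single Q 1 - Pi.single T 1 := by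
  ext X
  simp [chi, Pi.single_apply]

lemma moveSpan_le_span_image_single (S : Finset (ℤ × ℤ)) :
    moveSpan R S ≤ Submodule.span R ((fun P => Pi.single P (1 : R)) '' (S : Set (ℤ × ℤ))) := by
  have single_mem {P : ℤ × ℤ} (hP : P ∈ S) :
      Pi.single P 1 ∈ Submodule.span R ((fun P => Pi.single P (1 : R)) '' (S : Set (ℤ × ℤ))) :=
    Submodule.subset_span (Set.mem_image_of_mem _ hP)
  refine Submodule.span_le.2 ?_
  rintro _ ⟨_, ⟨P, d, -, h₀, h₁, h₂, rfl⟩, rfl⟩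
  beta_reduce
  rw [intCast_chi_add_chi_sub_chi]
  exact sub_mem (add_mem (single_mem h₀) (single_mem h₁)) (single_mem h₂)

variable {S : Finset (ℤ × ℤ)}

lemma single_add_single_sub_single_mem_moveSpan {P d : ℤ × ℤ} (hd : d ∈ dirs) (h₀ : P ∈ S)
    (h₁ : P + d ∈ S) (h₂ : P + d + d ∈ S) :
    Pi.single P 1 + Pi.single (P + d) 1 - Pi.single (P + d + d) 1 ∈ moveSpan R S :=
  Submodule.subset_span
    ⟨_, ⟨P, d, hd, h₀, h₁, h₂, rfl⟩, intCast_chi_add_chi_sub_chi R P (P + d) (P + d + d)⟩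

lemma two_smul_single_mem_moveSpan_of_isMiddle {Q : ℤ × ℤ} (hQ : IsMiddle S Q) :
    (2 : R) • Pi.single Q (1 : R) ∈ moveSpan R S := by
  obtain ⟨P, d, hd, h₀, h₁, h₂, rfl⟩ := hQ
  have forward := single_add_single_sub_single_mem_moveSpan R hd h₀ h₁ h₂
  have backward : Pi.single (P + d + d) 1 + Pi.single (P + d) 1 - Pi.single P 1 ∈ moveSpan R S := by
    simpa only [add_neg_cancel_right] using
      single_add_single_sub_single_mem_moveSpan R (neg_mem_dirs hd) h₂
        (by rwa [add_neg_cancel_right]) (by rwa [add_neg_cancel_right, add_neg_cancel_right])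
  convert add_mem forward backward using 1
  rw [two_smul]
  abel

variable {R}

lemma single_mem_moveSpan_of_isMiddle (h2 : IsUnit (2 : R)) {Q : ℤ × ℤ} (hQ : IsMiddle S Q) :
    Pi.single Q 1 ∈ moveSpan R S :=
  (Submodule.smul_mem_iff_of_isUnit _ h2).1 (two_smul_single_mem_moveSpan_of_isMiddle R hQ)

lemma single_sub_single_mem_moveSpan_of_neighbor (h2 : IsUnit (2 : R)) {A B : ℤ × ℤ}
    (hAB : Neighbor S A B) : Pi.single A 1 - Pi.single B 1 ∈ moveSpan R S := by
  obtain ⟨d, hd, h₀, h₁, h₂, rfl⟩ := hAB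
  have move := single_add_single_sub_single_mem_moveSpan R hd h₀ h₁ h₂
  have middle := single_mem_moveSpan_of_isMiddle h2 ⟨A, d, hd, h₀, h₁, h₂, rfl⟩
  convert sub_mem move middle using 1
  abel

lemma single_sub_single_mem_moveSpan_of_eqvGen (h2 : IsUnit (2 : R)) {A B : ℤ × ℤ}
    (hAB : Relation.EqvGen (Neighbor S) A B) :
    Pi.single A 1 - Pi.single B 1 ∈ moveSpan R S := by
  let congruence : Setoid (ℤ × ℤ) :=
    (moveSpan R S).quotientRel.comap fun P => Pi.single P 1
  have neighbor_le (C D : ℤ × ℤ) (hCD : Neighbor S C D) : congruence C D :=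
    (Submodule.quotientRel_def _).2 (single_sub_single_mem_moveSpan_of_neighbor h2 hCD)
  exact (Submodule.quotientRel_def _).1 (Setoid.eqvGen_le neighbor_le hAB)

lemma single_mem_moveSpan (h2 : IsUnit (2 : R)) (hS : NoIsolatedPoint S) {P : ℤ × ℤ}
    (hP : P ∈ S) : Pi.single P 1 ∈ moveSpan R S := by
  obtain ⟨Q, hPQ, hQ⟩ := hS P hP
  exact ((moveSpan R S).sub_mem_iff_left (single_mem_moveSpan_of_isMiddle h2 hQ)).1
    (single_sub_single_mem_moveSpan_of_eqvGen h2 hPQ)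

theorem span_moves_mod_odd_general (h2 : IsUnit (2 : R)) (hS : NoIsolatedPoint S) :
    moveSpan R S = Submodule.pi (S : Set (ℤ × ℤ))ᶜ fun _ => ⊥ := by
  rw [← span_image_single_eq_pi_compl]
  refine (moveSpan_le_span_image_single R S).antisymm (Submodule.span_le.2 ?_)
  rintro _ ⟨P, hP, rfl⟩
  exact single_mem_moveSpan h2 hS hP

end MoveSpan

lemma isUnit_two_zmod_of_odd {m : ℕ} (hm : Odd m) : IsUnit (2 : ZMod m) := by
  exact_mod_cast (ZMod.isUnit_iff_coprime 2 m).2 hm.coprime_two_left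

/-- For a board with no isolated point and odd `m`, the reductions mod `m` of the
moves generate the whole module of functions `S → ℤ/mℤ`. -/
theorem span_moves_mod_odd (S : Finset (ℤ × ℤ)) (hS : NoIsolatedPoint S)
    (m : ℕ) (hm : Odd m) (hmpos : 0 < m) :
    Submodule.span (ZMod m)
        ((fun (f : (ℤ × ℤ) → ℤ) (P : ℤ × ℤ) => (f P : ZMod m)) '' {f | IsMove S f})
      = suppSubmodule m S :=
  span_moves_mod_odd_general (isUnit_two_zmod_of_odd hm) hS
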